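/- Let u0₁, u0₂ : [0,∞) → ℝ be nonnegative, right-continuous, of locally bounded variation, both satisfying u0ᵢ(t) ≥ α for all t ∈ [0,α) for some α > 0. Let ℓ₁, ℓ₂ be the corresponding solutions of the nonlocal free-boundary equation ℓᵢ(t) = u0ᵢ(t) + |{ s ∈ [0,t] : ℓᵢ(t−s) > s }|, and define vᵢ(τ,ξ) := u0ᵢ(ξ) + |{ s ∈ [0,τ] : ℓᵢ(s) + s > ξ }| for 0 ≤ τ ≤ ξ. If u0₁ ≤ u0₂ pointwise, then v₁(τ,ξ) ≤ v₂(τ,ξ) for all 0 ≤ τ ≤ ξ. -/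

import Mathlib

open MeasureTheory Set

lemma mancala_fin (t : ℝ) (p : ℝ → Prop) : volume {s : ℝ | s ∈ Set.Icc 0 t ∧ p s} ≠ ⊤ := by
  apply ne_top_of_le_ne_top (b := volume (Set.Icc (0 : ℝ) t)) (by simp)
  exact measure_mono (fun s hs => hs.1)

lemma mancala_low (t a b : ℝ) (p : ℝ → Prop)
    (h : ∀ s ∈ Set.Ioo a b, s ∈ Set.Icc 0 t ∧ p s) :
    b - a ≤ (volume {s : ℝ | s ∈ Set.Icc 0 t ∧ p s}).toReal := by
  have h1 : volume (Set.Ioo a b) ≤ volume {s : ℝ | s ∈ Set.Icc 0 t ∧ p s} := measure_mono h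
  have h2 := ENNReal.toReal_mono (mancala_fin t p) h1
  rw [Real.volume_Ioo] at h2
  exact le_trans (by rw [ENNReal.toReal_ofReal']; exact le_max_left _ _) h2

lemma mancala_mono (t : ℝ) (p q : ℝ → Prop)
    (h : ∀ s ∈ Set.Icc 0 t, p s → q s) :
    (volume {s : ℝ | s ∈ Set.Icc 0 t ∧ p s}).toReal
      ≤ (volume {s : ℝ | s ∈ Set.Icc 0 t ∧ q s}).toReal :=
  ENNReal.toReal_mono (mancala_fin t q) (measure_mono fun s hs => ⟨hs.1, h s hs.1 hs.2⟩)

lemma mancala_ge (u l : ℝ → ℝ) (hu : ∀ t ≥ (0 : ℝ), 0 ≤ u t) (α : ℝ) (hα : 0 < α)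
    (hp : ∀ t ∈ Set.Ico (0 : ℝ) α, α ≤ u t)
    (hl : ∀ t ≥ (0 : ℝ),
      l t = u t + (volume {s : ℝ | s ∈ Set.Icc 0 t ∧ l (t - s) > s}).toReal) :
    ∀ t ≥ (0 : ℝ), α ≤ l t := by
  have key : ∀ n : ℕ, ∀ t ≥ (0 : ℝ), t < α + n * α → α ≤ l t := by
    intro n
    induction n with
    | zero =>
      intro t ht h
      have h1 := hp t ⟨ht, by simpa using h⟩
      rw [hl t ht]
      have : 0 ≤ (volume {s : ℝ | s ∈ Set.Icc 0 t ∧ l (t - s) > s}).toReal :=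
        ENNReal.toReal_nonneg
      linarith
    | succ n ih =>
      have hT : α ≤ α + n * α := by
        have : 0 ≤ (n : ℝ) * α := by positivity
        linarith
      have hS : α + ((n + 1 : ℕ) : ℝ) * α = (α + n * α) + α := by push_cast; ring
      rw [hS]
      generalize α + n * α = T at *
      have c1 : ∀ t, T ≤ t → α - (t - T) ≤ l t := by
        intro t ht
        have ht0 : t ≥ 0 := by linarith
        have h1 := hu t ht0
        have h2 := mancala_low t (t - T) α (fun s => l (t - s) > s) (by
          rintro s ⟨h3, h4⟩
          by_cases h5 : s ≤ t
          · exact ⟨⟨by linarith, h5⟩, lt_of_lt_of_le h4 (ih _ (by linarith) (by linarith))⟩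
          · exfalso; linarith)
        rw [hl t ht0]
        linarith
      intro t ht h
      by_cases htT : t < T
      · exact ih t ht htT
      push Not at htT
      have h1 := hu t ht
      have h2 := mancala_low t 0 α (fun s => l (t - s) > s) (by
        rintro s ⟨h3, h4⟩
        refine ⟨⟨h3.le, by linarith⟩, ?_⟩
        by_cases h5 : t - s < T
        · exact lt_of_lt_of_le h4 (ih _ (by linarith) h5)
        · have := c1 (t - s) (by linarith)
          show s < l (t - s)
          linarith)
      rw [hl t ht]
      linarith
  intro t ht
  obtain ⟨n, hn⟩ := exists_nat_gt (t / α)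
  rw [div_lt_iff₀ hα] at hn
  exact key n t ht (by linarith)

/-- Comparison principle for the reconstructed solutions:
`u0₁ ≤ u0₂` implies `v₁ ≤ v₂` on the octant `0 ≤ τ ≤ ξ`. -/
theorem mancala_solution_comparison
    (u01 u02 : ℝ → ℝ)
    (hu01_nonneg : ∀ t ≥ (0 : ℝ), 0 ≤ u01 t)
    (hu02_nonneg : ∀ t ≥ (0 : ℝ), 0 ≤ u02 t)
    (hu01_rc : ∀ t ≥ (0 : ℝ), ContinuousWithinAt u01 (Set.Ici t) t)
    (hu02_rc : ∀ t ≥ (0 : ℝ), ContinuousWithinAt u02 (Set.Ici t) t)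
    (hu01_bv : ∀ a > (0 : ℝ), BoundedVariationOn u01 (Set.Icc 0 a))
    (hu02_bv : ∀ a > (0 : ℝ), BoundedVariationOn u02 (Set.Icc 0 a))
    (α : ℝ) (hα : 0 < α)
    (hu01_pos : ∀ t ∈ Set.Ico (0 : ℝ) α, α ≤ u01 t)
    (hu02_pos : ∀ t ∈ Set.Ico (0 : ℝ) α, α ≤ u02 t)
    (ℓ₁ ℓ₂ : ℝ → ℝ)
    (hℓ₁ : ∀ t ≥ (0 : ℝ),
      ℓ₁ t = u01 t + (volume {s : ℝ | s ∈ Set.Icc 0 t ∧ ℓ₁ (t - s) > s}).toReal)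
    (hℓ₂ : ∀ t ≥ (0 : ℝ),
      ℓ₂ t = u02 t + (volume {s : ℝ | s ∈ Set.Icc 0 t ∧ ℓ₂ (t - s) > s}).toReal)
    (v₁ v₂ : ℝ → ℝ → ℝ)
    (hv₁ : ∀ τ ξ : ℝ, 0 ≤ τ → τ ≤ ξ →
      v₁ τ ξ = u01 ξ + (volume {s : ℝ | s ∈ Set.Icc 0 τ ∧ ℓ₁ s + s > ξ}).toReal)
    (hv₂ : ∀ τ ξ : ℝ, 0 ≤ τ → τ ≤ ξ →
      v₂ τ ξ = u02 ξ + (volume {s : ℝ | s ∈ Set.Icc 0 τ ∧ ℓ₂ s + s > ξ}).toReal)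
    (h_le : ∀ t ≥ (0 : ℝ), u01 t ≤ u02 t) :
    ∀ τ ξ : ℝ, 0 ≤ τ → τ ≤ ξ → v₁ τ ξ ≤ v₂ τ ξ := by
  have hge := mancala_ge u02 ℓ₂ hu02_nonneg α hα hu02_pos hℓ₂
  have key : ∀ n : ℕ, ∀ t ≥ (0 : ℝ), t < n * α → ℓ₁ t ≤ ℓ₂ t := by
    intro n
    induction n with
    | zero =>
      intro t ht h
      simp at h
      linarith
    | succ n ih =>
      intro t ht h
      push_cast at h
      rw [hℓ₁ t ht, hℓ₂ t ht]
      refine add_le_add (h_le t ht) (mancala_mono t _ _ ?_)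
      rintro s ⟨hs0, hst⟩ h1
      by_cases h2 : t - s < n * α
      · exact lt_of_lt_of_le h1 (ih _ (by linarith) h2)
      · have := hge (t - s) (by linarith)
        show s < ℓ₂ (t - s)
        linarith
  have hle : ∀ t ≥ (0 : ℝ), ℓ₁ t ≤ ℓ₂ t := by
    intro t ht
    obtain ⟨n, hn⟩ := exists_nat_gt (t / α)
    rw [div_lt_iff₀ hα] at hn
    exact key n t ht hn
  intro τ ξ h0 h1
  rw [hv₁ τ ξ h0 h1, hv₂ τ ξ h0 h1]
  refine add_le_add (h_le ξ (h0.trans h1)) (mancala_mono τ _ _ ?_)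
  intro s hs h2
  have := hle s hs.1
  show ξ < ℓ₂ s + s
  linarith
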